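/- Let x ∈ ℝ^d with range(x) := max_j x_j − min_j x_j > 0, let b ≥ 1 be a natural number, set s := range(x)/(2^b − 1), and choose the integer zero point z := −round((min_j x_j)/s). Then for every coordinate j, the quantized integer value satisfies 0 ≤ round(x_j/s) + z ≤ 2^b − 1; that is, with min-max scaling the clamp operation clamp(·, 0, 2^b − 1) is the identity and no clipping error occurs. -/

import Mathlib

/-- The range of a vector: `max_j x_j − min_j x_j`. -/
noncomputable def vrange {d : ℕ} (x : Fin d → ℝ) : ℝ := (⨆ j, x j) - (⨅ j, x j)

/-- With the min-max scale `s = range(x)/(2^b − 1)` and zero point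
`z = −round(min_j x_j / s)`, every quantized integer `round(x_j/s) + z` lies in
`[0, 2^b − 1]`, so clamping is the identity and no clipping error occurs. -/
theorem minmax_no_clipping
    (d : ℕ) (hd : 1 ≤ d) (x : Fin d → ℝ) (hr : 0 < vrange x)
    (b : ℕ) (hb : 1 ≤ b) :
    ∀ j : Fin d,
      0 ≤ round (x j / (vrange x / ((2 : ℝ) ^ b - 1))) +
          (-round ((⨅ k, x k) / (vrange x / ((2 : ℝ) ^ b - 1)))) ∧
      round (x j / (vrange x / ((2 : ℝ) ^ b - 1))) +
          (-round ((⨅ k, x k) / (vrange x / ((2 : ℝ) ^ b - 1)))) ≤ 2 ^ b - 1 := by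
  intro j
  have hP : (0 : ℝ) < (2 : ℝ) ^ b - 1 := by
    have : (1 : ℝ) < (2 : ℝ) ^ b := one_lt_pow₀ (by norm_num) (by omega)
    linarith
  have hs : 0 < vrange x / ((2 : ℝ) ^ b - 1) := div_pos hr hP
  have hmin : (⨅ k, x k) ≤ x j := ciInf_le (Set.finite_range x).bddBelow j
  have hmax : x j ≤ (⨆ k, x k) := le_ciSup (Set.finite_range x).bddAbove j
  have hv : (⨆ k, x k) = (⨅ k, x k) + vrange x := by unfold vrange; ring
  have hmono : ∀ u v : ℝ, u ≤ v → round u ≤ round v := by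
    intro u v huv
    rw [round_eq, round_eq]
    exact Int.floor_mono (by linarith)
  have h1 := hmono _ _ (div_le_div_of_nonneg_right hmin hs.le)
  have h2 : x j / (vrange x / ((2 : ℝ) ^ b - 1)) ≤
      (⨅ k, x k) / (vrange x / ((2 : ℝ) ^ b - 1)) + (((2 : ℤ) ^ b - 1 : ℤ) : ℝ) := by
    have e : vrange x / (vrange x / ((2 : ℝ) ^ b - 1)) = (2 : ℝ) ^ b - 1 :=
      div_div_cancel₀ hr.ne'
    push_cast
    rw [← e, e, ← sub_le_iff_le_add', ← sub_div, div_le_iff₀ hs, mul_div_cancel₀ _ hP.ne']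
    linarith
  have h3 := hmono _ _ h2
  rw [round_add_intCast] at h3
  constructor <;> linarith
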